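/- Let L = {0, +, −, <, P} with P a unary relation symbol. (a) Let M₁ be the L-structure whose universe is the real numbers with the standard ordered additive group structure and with P interpreted as {2^k : k ∈ ℤ}. Then Th(M₁) is not strong. (b) Let M₂ be the L-structure whose universe is the integers with the standard ordered additive group structure and with P interpreted as {2^k : k ∈ ℕ}. Then Th(M₂) is not strong. -/

import Mathlib

/- Common model-theoretic definitions. -/

open FirstOrder Set

universe u v w

/-- An inp-pattern of depth `κ` in `nvars` free variables witnessed in the `L`-structure `N`:
formulas `φ α (x̄; ȳ_α)` (with `m α` parameter variables), positive integers `k α`, and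
parameter tuples `b α i` such that each row is `k α`-inconsistent (no tuple of `N` realizes
`φ α (x̄; b α i)` for `k α` distinct values of `i`), while every path is finitely consistent. -/
def IsInpPattern (L : FirstOrder.Language.{u, v}) (N : Type*) [L.Structure N]
    (κ : Type*) (nvars : ℕ) : Prop :=
  ∃ (m : κ → ℕ) (φ : ∀ α : κ, L.Formula (Fin nvars ⊕ Fin (m α)))
    (k : κ → ℕ) (b : ∀ α : κ, ℕ → Fin (m α) → N),
    (∀ α, 1 ≤ k α) ∧
    (∀ α : κ, ¬ ∃ (x : Fin nvars → N) (s : Finset ℕ),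
        k α ≤ s.card ∧ ∀ i ∈ s, (φ α).Realize (Sum.elim x (b α i))) ∧
    (∀ (η : κ → ℕ) (S : Finset κ), ∃ x : Fin nvars → N,
        ∀ α ∈ S, (φ α).Realize (Sum.elim x (b α (η α))))

/-- `Th(M)` has burden at least `n`: some model of `Th(M)` witnesses an inp-pattern of
depth `n` in a single variable. -/
def HasBurdenAtLeast (L : FirstOrder.Language.{u, v}) (M : Type w) [L.Structure M]
    (n : ℕ) : Prop :=
  ∃ N : FirstOrder.Language.Theory.ModelType.{u, v, max u v w} (L.completeTheory M),
    IsInpPattern L N (Fin n) 1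

/-- `Th(M)` has finite burden: for some `n`, no model of `Th(M)` witnesses an inp-pattern of
depth `n + 1` in a single variable. -/
def HasFiniteBurden (L : FirstOrder.Language.{u, v}) (M : Type w) [L.Structure M] : Prop :=
  ∃ n : ℕ, ¬ HasBurdenAtLeast L M (n + 1)

/-- `Th(M)` is strong: no model of `Th(M)` witnesses an inp-pattern of depth `ω` in any
finite tuple of variables. -/
def IsStrong (L : FirstOrder.Language.{u, v}) (M : Type w) [L.Structure M] : Prop :=
  ∀ (N : FirstOrder.Language.Theory.ModelType.{u, v, max u v w} (L.completeTheory M))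
    (nvars : ℕ), ¬ IsInpPattern L N ℕ nvars

/-- A set `D` in a linear order is discrete if each of its points is isolated in it. -/
def DiscreteIn {R : Type*} [LinearOrder R] (D : Set R) : Prop :=
  ∀ x ∈ D, ∃ a b : R, a < x ∧ x < b ∧ Set.Ioo a b ∩ D = {x}

/-- `M` is definably complete: every nonempty definable subset of `R` that is bounded above
has a least upper bound. -/
def DefinablyComplete (L : FirstOrder.Language.{u, v}) (R : Type w)
    [LinearOrder R] [L.Structure R] : Prop :=
  ∀ X : Set R, (Set.univ : Set R).Definable₁ L X → X.Nonempty → BddAbove X →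
    ∃ a : R, IsLUB X a

/-- Function symbols of the language `{0, +, −, <, P}`: a constant `0`, unary `−`,
binary `+`. -/
inductive OagPFunc : ℕ → Type
  | zero : OagPFunc 0
  | neg : OagPFunc 1
  | add : OagPFunc 2

/-- Relation symbols of the language `{0, +, −, <, P}`: binary `<` and unary `P`. -/
inductive OagPRel : ℕ → Type
  | lt : OagPRel 2
  | P : OagPRel 1

/-- The language `{0, +, −, <, P}` with `P` a unary relation symbol. -/
def LoagP : FirstOrder.Language := ⟨OagPFunc, OagPRel⟩

/-- The structure `M₁`: the reals with the standard ordered additive group structure and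
`P` interpreted as `{2 ^ k : k ∈ ℤ}`. -/
instance : LoagP.Structure ℝ where
  funMap {n} f v :=
    match f with
    | .zero => 0
    | .neg => -(v 0)
    | .add => v 0 + v 1
  RelMap {n} r v :=
    match r with
    | .lt => v 0 < v 1
    | .P => ∃ k : ℤ, v 0 = 2 ^ k

/-- The structure `M₂`: the integers with the standard ordered additive group structure and
`P` interpreted as `{2 ^ k : k ∈ ℕ}`. -/
instance : LoagP.Structure ℤ where
  funMap {n} f v :=
    match f with
    | .zero => 0
    | .neg => -(v 0)
    | .add => v 0 + v 1
  RelMap {n} r v :=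
    match r with
    | .lt => v 0 < v 1
    | .P => ∃ k : ℕ, v 0 = 2 ^ k

/-!
Row `n` of the pattern consists of the formulas saying that the `n`-th leading binary digit of `x`
is `y`, where `y` runs through a sequence of distinct powers of `2`: the row is `2`-inconsistent
since a number determines its digits. A path asks for an `x` with prescribed leading digits, and the
sum of these digits works as soon as they form a decreasing sequence. To make every path decreasing,
let the `i`-th parameter of row `n` be `2 ^ ((t - n) * t + i)`: along any path and for any `N`,
these decrease with `n < N` once `t` is large enough. The pattern is then realized in an ultrapower
of the group, where `t` becomes infinite. Of the powers of `2` one only uses that each of them is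
at least the double of every smaller one.
-/

section Ultrapower

open Filter FirstOrder.Language

/-- The ultrapower of `M` modulo `𝒰`, as the constant case of Mathlib's ultraproduct, which carries
its first-order structure. -/
abbrev Ultrapower {ι : Type*} (𝒰 : Ultrafilter ι) (M : Type*) : Type _ :=
  (𝒰 : Filter ι).Product fun _ => M

variable {L : FirstOrder.Language.{u, v}} {ι : Type*}

theorem ultrapower_models_completeTheory (𝒰 : Ultrafilter ι) (M : Type*) [L.Structure M]
    [Nonempty M] : Ultrapower 𝒰 M ⊨ L.completeTheory M :=
  (Theory.model_iff _).2 fun σ hσ =>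
    (Ultraproduct.sentence_realize (M := fun _ => M) σ).2 (Eventually.of_forall fun _ => hσ)

variable {M : Type*} [L.Structure M]

theorem realize_sumElim_ultrapower [Nonempty M] {𝒰 : Ultrafilter ι} {β γ : Type*}
    (φ : L.Formula (β ⊕ γ)) (x : β → ι → M) (y : γ → ι → M) :
    φ.Realize (Sum.elim (fun j => (x j : Ultrapower 𝒰 M)) (fun j => (y j : Ultrapower 𝒰 M))) ↔
      ∀ᶠ t in 𝒰, φ.Realize (Sum.elim (x · t) (y · t)) := by
  have los := Ultraproduct.realize_formula_cast (M := fun _ => M) (u := 𝒰) φ (Sum.elim x y)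
  have hM (t : ι) : (fun j => Sum.elim x y j t) = Sum.elim (x · t) (y · t) := by
    ext (j | j) <;> rfl
  simp only [hM] at los
  convert los using 2
  ext (j | j) <;> rfl

theorem isInpPattern_ultrapower [Nonempty M] {𝒰 : Ultrafilter ι} {κ : Type*} {nvars : ℕ}
    {m : κ → ℕ} (φ : ∀ α, L.Formula (Fin nvars ⊕ Fin (m α))) (k : κ → ℕ)
    (b : ∀ α, ℕ → Fin (m α) → ι → M) (hk : ∀ α, 1 ≤ k α)
    (hrow : ∀ α (s : Finset ℕ), k α ≤ s.card →
      ∀ᶠ t in 𝒰, ¬∃ x : Fin nvars → M, ∀ i ∈ s, (φ α).Realize (Sum.elim x (b α i · t)))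
    (hpath : ∀ (η : κ → ℕ) (S : Finset κ),
      ∀ᶠ t in 𝒰, ∃ x : Fin nvars → M, ∀ α ∈ S, (φ α).Realize (Sum.elim x (b α (η α) · t))) :
    IsInpPattern L (Ultrapower 𝒰 M) κ nvars := by
  refine ⟨m, φ, k, fun α i j => b α i j, hk, ?_, fun η S => ?_⟩
  · rintro α ⟨x, s, hs, hx⟩
    choose f hf using fun j => Quotient.exists_rep (x j)
    obtain rfl : (fun j => (f j : Ultrapower 𝒰 M)) = x := funext hf
    have realized : ∀ᶠ t in 𝒰, ∀ i ∈ s, (φ α).Realize (Sum.elim (f · t) (b α i · t)) :=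
      (eventually_all_finset s).2 fun i hi => (realize_sumElim_ultrapower _ _ _).1 (hx i hi)
    obtain ⟨t, not_realized, ht⟩ := ((hrow α s hs).and realized).exists
    exact not_realized ⟨(f · t), ht⟩
  · obtain ⟨f, hf⟩ := (hpath η S).choice
    exact ⟨fun j => ((f · j) : ι → M), fun α hα =>
      (realize_sumElim_ultrapower _ (fun j t => f t j) _).2 (hf.mono fun t ht => ht α hα)⟩

theorem not_isStrong_of_eventually {M : Type (max u v w)} [L.Structure M] [Nonempty M]
    {ι : Type} {l : Filter ι} [l.NeBot] {nvars : ℕ}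
    {m : ℕ → ℕ} (φ : ∀ α, L.Formula (Fin nvars ⊕ Fin (m α))) (k : ℕ → ℕ)
    (b : ∀ α, ℕ → Fin (m α) → ι → M) (hk : ∀ α, 1 ≤ k α)
    (hrow : ∀ α (s : Finset ℕ), k α ≤ s.card →
      ∀ᶠ t in l, ¬∃ x : Fin nvars → M, ∀ i ∈ s, (φ α).Realize (Sum.elim x (b α i · t)))
    (hpath : ∀ (η : ℕ → ℕ) (S : Finset ℕ),
      ∀ᶠ t in l, ∃ x : Fin nvars → M, ∀ α ∈ S, (φ α).Realize (Sum.elim x (b α (η α) · t))) :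
    ¬IsStrong L M := fun strong =>
  have := ultrapower_models_completeTheory (L := L) (Ultrafilter.of l) M
  strong (Theory.ModelType.of _ (Ultrapower (Ultrafilter.of l) M)) nvars <|
    isInpPattern_ultrapower φ k b hk
      (fun α s hs => (hrow α s hs).filter_mono (Ultrafilter.of_le l))
      (fun η S => (hpath η S).filter_mono (Ultrafilter.of_le l))

end Ultrapower

section Digits

/-- A set is lacunary if each of its elements is at least the double of every smaller one; for
positive elements this is Hadamard's gap condition with ratio `2`. -/
def IsLacunary {M : Type*} [Add M] [Preorder M] (D : Set M) : Prop :=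
  ∀ ⦃a⦄, a ∈ D → ∀ ⦃b⦄, b ∈ D → a < b → a + a ≤ b

/-- `z` is the leading digit of `x` with respect to the set of digits `D`. When `D` is the set of
powers of `2`, digits are recorded with their place value: `z = 2 ^ k` for the leading position `k`
of the binary expansion of `x`. -/
def IsLeadingDigit {M : Type*} [Add M] [Preorder M] (D : Set M) (x z : M) : Prop :=
  z ∈ D ∧ z ≤ x ∧ x < z + z

/-- `y` is the `n`-th digit of `x`, counted from `0` and from the top: it is the leading digit of
what remains of `x` after `n` times subtracting the leading digit. -/
def IsDigit {M : Type*} [AddGroup M] [Preorder M] (D : Set M) : ℕ → M → M → Prop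
  | 0, x, y => IsLeadingDigit D x y
  | n + 1, x, y => ∃ z, IsLeadingDigit D x z ∧ IsDigit D n (x - z) y

theorem IsLeadingDigit.eq {M : Type*} [Add M] [LinearOrder M] {D : Set M} (hD : IsLacunary D)
    {x y z : M} (hy : IsLeadingDigit D x y) (hz : IsLeadingDigit D x z) : y = z := by
  obtain ⟨y_mem, y_le, lt_y⟩ := hy
  obtain ⟨z_mem, z_le, lt_z⟩ := hz
  rcases lt_trichotomy y z with h | h | h
  · exact absurd (lt_y.trans_le (hD y_mem z_mem h)) z_le.not_gt
  · exact h
  · exact absurd (lt_z.trans_le (hD z_mem y_mem h)) y_le.not_gt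

theorem IsDigit.eq {M : Type*} [AddGroup M] [LinearOrder M] {D : Set M} (hD : IsLacunary D) {n : ℕ}
    {x y y' : M} (hy : IsDigit D n x y) (hy' : IsDigit D n x y') : y = y' := by
  induction n generalizing x with
  | zero => exact IsLeadingDigit.eq hD hy hy'
  | succ n ih =>
    obtain ⟨z, hz, hy⟩ := hy
    obtain ⟨z', hz', hy'⟩ := hy'
    obtain rfl := hz.eq hD hz'
    exact ih hy hy'

variable {M : Type*} [AddCommGroup M] [LinearOrder M] [IsOrderedAddMonoid M] {D : Set M}

theorem IsLacunary.list_sum_lt (hD : IsLacunary D) {z : M} {l : List M} (hmem : ∀ a ∈ z :: l, a ∈ D)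
    (hpos : ∀ a ∈ z :: l, 0 < a) (hl : (z :: l).Pairwise (· > ·)) : l.sum < z := by
  induction l generalizing z with
  | nil => exact hpos z (by simp)
  | cons a l ih =>
    rw [List.forall_mem_cons] at hmem hpos
    obtain ⟨hz, hal⟩ := List.pairwise_cons.1 hl
    calc (a :: l).sum = a + l.sum := List.sum_cons
      _ < a + a := add_lt_add_right (ih hmem.2 hpos.2 hal) a
      _ ≤ z := hD (hmem.2 a (by simp)) hmem.1 (hz a (by simp))

theorem IsLacunary.isLeadingDigit_sum_cons (hD : IsLacunary D) {z : M} {l : List M}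
    (hmem : ∀ a ∈ z :: l, a ∈ D) (hpos : ∀ a ∈ z :: l, 0 < a) (hl : (z :: l).Pairwise (· > ·)) :
    IsLeadingDigit D (z :: l).sum z := by
  rw [List.sum_cons]
  exact ⟨hmem z (by simp),
    le_add_of_nonneg_right (List.sum_nonneg fun a ha => (hpos a (List.mem_cons_of_mem z ha)).le),
    add_lt_add_right (hD.list_sum_lt hmem hpos hl) z⟩

theorem IsLacunary.isDigit_sum (hD : IsLacunary D) {l : List M} (hmem : ∀ a ∈ l, a ∈ D)
    (hpos : ∀ a ∈ l, 0 < a) (hl : l.Pairwise (· > ·)) {n : ℕ} (hn : n < l.length) :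
    IsDigit D n l.sum l[n] := by
  induction l generalizing n with
  | nil => exact absurd hn n.not_lt_zero
  | cons z l ih =>
    have leading := hD.isLeadingDigit_sum_cons hmem hpos hl
    cases n with
    | zero => exact leading
    | succ n =>
      refine ⟨z, leading, ?_⟩
      rw [List.sum_cons, add_sub_cancel_left]
      exact ih (List.forall_mem_cons.1 hmem).2 (List.forall_mem_cons.1 hpos).2 hl.of_cons
        (Nat.lt_of_succ_lt_succ hn)

theorem IsLacunary.exists_forall_isDigit (hD : IsLacunary D) {d : ℕ → M} {N : ℕ}
    (hmem : ∀ n, d n ∈ D) (hpos : ∀ n, 0 < d n) (hd : StrictAntiOn d (Iio N)) :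
    ∃ x, ∀ n < N, IsDigit D n x (d n) := by
  have hl : ((List.range N).map d).Pairwise (· > ·) :=
    List.pairwise_map.2 <| List.pairwise_lt_range.imp_of_mem fun hi hj hij =>
      hd (List.mem_range.1 hi) (List.mem_range.1 hj) hij
  refine ⟨((List.range N).map d).sum, fun n hn => ?_⟩
  have digit := hD.isDigit_sum (by simp [hmem]) (by simp [hpos]) hl (n := n) (by simpa using hn)
  rwa [List.getElem_map, List.getElem_range] at digit

end Digits

section Formulas

open FirstOrder.Language

namespace LoagP

/-- The constant symbol `0`. As for the four symbols below, its type mentions `LoagP` rather than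
an inductive type of symbols, so that the `simp` lemmas on terms and formulas apply. -/
def zeroSymb : LoagP.Functions 0 := OagPFunc.zero

/-- The function symbol `−`. -/
def negSymb : LoagP.Functions 1 := OagPFunc.neg

/-- The function symbol `+`. -/
def addSymb : LoagP.Functions 2 := OagPFunc.add

/-- The relation symbol `<`. -/
def ltSymb : LoagP.Relations 2 := OagPRel.lt

/-- The relation symbol `P`. -/
def predSymb : LoagP.Relations 1 := OagPRel.P

end LoagP

/-- The `LoagP`-structure on `M` interprets `0`, `+`, `−` and `<` by the operations and the order
of `M`, with no condition on the interpretation of `P`. -/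
class IsOrderedGroupExpansion (M : Type*) [Zero M] [Add M] [Neg M] [LT M] [LoagP.Structure M] :
    Prop where
  funMap_zero : Structure.funMap LoagP.zeroSymb ![] = (0 : M)
  funMap_neg (a : M) : Structure.funMap LoagP.negSymb ![a] = -a
  funMap_add (a b : M) : Structure.funMap LoagP.addSymb ![a, b] = a + b
  relMap_lt (a b : M) : Structure.RelMap LoagP.ltSymb ![a, b] ↔ a < b

/-- The interpretation of the unary predicate `P` in `M`. -/
def predicateSet (M : Type*) [LoagP.Structure M] : Set M :=
  {z | Structure.RelMap LoagP.predSymb ![z]}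

/-- The formula defining `IsLeadingDigit`, for the set of digits `P`. -/
def leadingDigitFormula {β : Type} (x z : LoagP.Term β) : LoagP.Formula β :=
  LoagP.predSymb.formula₁ z ⊓
    (∼(LoagP.ltSymb.formula₂ x z) ⊓ LoagP.ltSymb.formula₂ x (LoagP.addSymb.apply₂ z z))

/-- The formula defining `IsDigit`, for the set of digits `P`. The recursion passes to the term
`x - z`, where `z` is a new variable. -/
noncomputable def digitFormula : ℕ → ∀ {β : Type}, LoagP.Term β → LoagP.Term β → LoagP.Formula β
  | 0, _, x, y => leadingDigitFormula x y
  | n + 1, _, x, y =>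
    let z := Term.var (Sum.inr ())
    let x' := x.relabel Sum.inl
    Formula.iExs Unit <| leadingDigitFormula x' z ⊓
      digitFormula n (LoagP.addSymb.apply₂ x' (LoagP.negSymb.apply₁ z)) (y.relabel Sum.inl)

theorem realize_leadingDigitFormula {M : Type*} [Zero M] [Add M] [Neg M] [LinearOrder M]
    [LoagP.Structure M] [IsOrderedGroupExpansion M] {β : Type} (x z : LoagP.Term β) (v : β → M) :
    (leadingDigitFormula x z).Realize v ↔
      IsLeadingDigit (predicateSet M) (x.realize v) (z.realize v) := by
  simp only [leadingDigitFormula, Formula.realize_inf, Formula.realize_not, Formula.realize_rel₁,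
    Formula.realize_rel₂, Term.realize_functions_apply₂, IsOrderedGroupExpansion.funMap_add,
    IsOrderedGroupExpansion.relMap_lt, not_lt, IsLeadingDigit, predicateSet, mem_ofPred_eq]

theorem realize_digitFormula {M : Type*} [AddGroup M] [LinearOrder M] [LoagP.Structure M]
    [IsOrderedGroupExpansion M] (n : ℕ) {β : Type} (x y : LoagP.Term β) (v : β → M) :
    (digitFormula n x y).Realize v ↔ IsDigit (predicateSet M) n (x.realize v) (y.realize v) := by
  induction n generalizing β with
  | zero => exact realize_leadingDigitFormula x y v
  | succ n ih =>
    simp only [digitFormula, Formula.realize_iExs, Formula.realize_inf, realize_leadingDigitFormula,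
      ih, Term.realize_relabel, Term.realize_functions_apply₁, Term.realize_functions_apply₂,
      IsOrderedGroupExpansion.funMap_add, IsOrderedGroupExpansion.funMap_neg, Term.realize_var,
      Sum.elim_comp_inl, Sum.elim_inr, ← sub_eq_add_neg]
    exact (Equiv.funUnique Unit M).exists_congr_left

end Formulas

section Pattern

open Filter

theorem strictAntiOn_sub_mul_add {η : ℕ → ℕ} {N t : ℕ} (hN : N ≤ t) (hη : ∀ n < N, η n < t) :
    StrictAntiOn (fun n => (t - n) * t + η n) (Iio N) := by
  intro i _ j hj hij
  have hjN : j < N := hj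
  calc (t - j) * t + η j < (t - j) * t + t := by gcongr; exact hη j hj
    _ = (t - j + 1) * t := by ring
    _ ≤ (t - i) * t := by gcongr; omega
    _ ≤ (t - i) * t + η i := Nat.le_add_right _ _

theorem statement_11_general {M : Type w} [AddCommGroup M] [LinearOrder M] [IsOrderedAddMonoid M]
    [LoagP.Structure M] [IsOrderedGroupExpansion M] (hP : IsLacunary (predicateSet M))
    {p : ℕ → M} (p_mem : ∀ n, p n ∈ predicateSet M) (p_pos : ∀ n, 0 < p n) (hp : StrictMono p) :
    ¬IsStrong LoagP M := by
  refine not_isStrong_of_eventually (l := atTop) (nvars := 1) (m := fun _ => 1)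
    (fun n => digitFormula n (.var (.inl 0)) (.var (.inr 0))) (fun _ => 2)
    (fun n i _ t => p ((t - n) * t + i)) (fun _ => one_le_two) (fun n s hs => ?_) (fun η S => ?_)
  · refine Eventually.of_forall fun t => ?_
    rintro ⟨x, hx⟩
    obtain ⟨i, hi, j, hj, hij⟩ := Finset.one_lt_card.1 hs
    have digits_eq : p ((t - n) * t + i) = p ((t - n) * t + j) :=
      ((realize_digitFormula _ _ _ _).1 (hx i hi)).eq hP
        ((realize_digitFormula _ _ _ _).1 (hx j hj))
    exact hij (Nat.add_left_cancel (hp.injective digits_eq))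
  · obtain ⟨N, hN⟩ := S.exists_nat_subset_range
    filter_upwards [eventually_ge_atTop N,
      (eventually_all_finset (Finset.range N)).2 fun n _ => eventually_gt_atTop (η n)] with t hNt hη
    have digits_anti := hp.comp_strictAntiOn
      (strictAntiOn_sub_mul_add hNt fun n hn => hη n (Finset.mem_range.2 hn))
    obtain ⟨x, hx⟩ := hP.exists_forall_isDigit (fun _ => p_mem _) (fun _ => p_pos _) digits_anti
    exact ⟨fun _ => x, fun n hn =>
      (realize_digitFormula _ _ _ _).2 (hx n (Finset.mem_range.1 (hN hn)))⟩

end Pattern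

section PowersOfTwo

theorem isLacunary_range_two_pow {R : Type*} [Semiring R] [LinearOrder R] [IsStrictOrderedRing R] :
    IsLacunary (range fun k : ℕ => (2 : R) ^ k) := by
  rintro _ ⟨k, rfl⟩ _ ⟨l, rfl⟩ h
  have hkl : k < l := (pow_lt_pow_iff_right₀ one_lt_two).1 h
  calc (2 : R) ^ k + 2 ^ k = 2 ^ (k + 1) := by rw [pow_succ, mul_two]
    _ ≤ 2 ^ l := pow_le_pow_right₀ one_le_two hkl

theorem isLacunary_range_two_zpow {K : Type*} [Field K] [LinearOrder K] [IsStrictOrderedRing K] :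
    IsLacunary (range fun k : ℤ => (2 : K) ^ k) := by
  rintro _ ⟨k, rfl⟩ _ ⟨l, rfl⟩ h
  have hkl : k < l := (zpow_lt_zpow_iff_right₀ one_lt_two).1 h
  calc (2 : K) ^ k + 2 ^ k = 2 ^ (k + 1) := by rw [zpow_add_one₀ two_ne_zero, mul_two]
    _ ≤ 2 ^ l := zpow_le_zpow_right₀ one_le_two hkl

instance : IsOrderedGroupExpansion ℝ := ⟨rfl, fun _ => rfl, fun _ _ => rfl, fun _ _ => Iff.rfl⟩

instance : IsOrderedGroupExpansion ℤ := ⟨rfl, fun _ => rfl, fun _ _ => rfl, fun _ _ => Iff.rfl⟩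

theorem predicateSet_real : predicateSet ℝ = range fun k : ℤ => (2 : ℝ) ^ k :=
  ext fun _ => exists_congr fun _ => eq_comm

theorem predicateSet_int : predicateSet ℤ = range fun k : ℕ => (2 : ℤ) ^ k :=
  ext fun _ => exists_congr fun _ => eq_comm

end PowersOfTwo

/-- (a) The theory of `⟨ℝ; 0, +, −, <, {2^k : k ∈ ℤ}⟩` is not strong.
(b) The theory of `⟨ℤ; 0, +, −, <, {2^k : k ∈ ℕ}⟩` is not strong. -/
theorem statement_11 : ¬ IsStrong LoagP ℝ ∧ ¬ IsStrong LoagP ℤ :=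
  ⟨statement_11_general (p := (2 ^ ·)) (predicateSet_real ▸ isLacunary_range_two_zpow)
    (fun n => ⟨n, (zpow_natCast 2 n).symm⟩) (pow_pos two_pos) (pow_right_strictMono₀ one_lt_two),
  statement_11_general (p := (2 ^ ·)) (predicateSet_int ▸ isLacunary_range_two_pow)
    (fun n => ⟨n, rfl⟩) (pow_pos two_pos) (pow_right_strictMono₀ one_lt_two)⟩
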